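/- Let H be a real Hilbert space, λ > 0, γ > 0, k₀ > 0. Let 𝓑 : H → H be a bounded self-adjoint linear operator with ⟨v, 𝓑v⟩ ≥ 0 and ‖𝓑v‖² ≤ λ⟨v, 𝓑v⟩ for all v ∈ H. Let 𝓛 : H → H be Lipschitz with constant k₀ and strongly monotone: ⟨f₁ − f₂, 𝓛f₁ − 𝓛f₂⟩ ≤ −γ‖f₁ − f₂‖² for all f₁, f₂ ∈ H. Let u ∈ H satisfy 𝓛u = 0, fix g ∈ H and v₀ ∈ H, and let v : [0,∞) → H be differentiable with v(0) = v₀ and v'(t) = 𝓛(𝓑v_t + u + g) for all t ≥ 0. Define Q_t := 𝓑v_t + u + g. Then there exists a constant C > 0, depending only on γ, λ and k₀, such that for all t ≥ 0, ∫₀ᵗ ‖Q_s − u‖² ds ≤ C t ‖g‖² + C ⟨v₀, 𝓑v₀⟩. -/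

import Mathlib

open scoped RealInnerProductSpace

/-!
Write `e = Q - u = 𝓑v + g` and `q = 𝓛Q = v'`. The energy `⟪v, 𝓑v⟫` satisfies
`⟪v, 𝓑v⟫' = 2⟪𝓑v, q⟫ = 2⟪e - g, q⟫`. Monotonicity makes `2⟪e, q⟫` at most `-2γ‖e‖²`, and since
`‖q‖ ≤ k‖e‖`, the forcing term `-2⟪g, q⟫` is absorbed by Young's inequality at the price of
`γ‖e‖²`. Hence `γ‖e‖² + ⟪v, 𝓑v⟫' ≤ (k² / γ)‖g‖²`; integrate in time and drop the
final energy, which is nonnegative.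
-/

section

open Set

variable {H : Type*} [NormedAddCommGroup H] [InnerProductSpace ℝ H]

theorem integral_le_of_add_hasDerivWithinAt_le {a b c : ℝ} {φ E E' : ℝ → ℝ} (hab : a ≤ b)
    (hφ : MeasureTheory.IntegrableOn φ (Icc a b))
    (hE : ∀ s ∈ Icc a b, HasDerivWithinAt E (E' s) (Icc a b) s)
    (hle : ∀ s ∈ Ioo a b, φ s + E' s ≤ c) :
    ∫ s in a..b, φ s ≤ c * (b - a) + E a - E b := by
  have hcont : ContinuousOn (fun s ↦ c * s - E s) (Icc a b) :=
    (continuousOn_const.mul continuousOn_id).sub fun s hs ↦ (hE s hs).continuousWithinAt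
  have hderiv : ∀ s ∈ Ioo a b,
      HasDerivWithinAt (fun s ↦ c * s - E s) (c - E' s) (Ioi s) s := fun s hs ↦
    (hasDerivAt_const_mul c).hasDerivWithinAt.sub
      ((hE s (Ioo_subset_Icc_self hs)).hasDerivAt (Icc_mem_nhds hs.1 hs.2)).hasDerivWithinAt
  calc ∫ s in a..b, φ s ≤ (c * b - E b) - (c * a - E a) :=
        intervalIntegral.integral_le_sub_of_hasDeriv_right_of_le hab hcont hderiv hφ
          fun s hs ↦ le_sub_iff_add_le.mpr (hle s hs)
    _ = c * (b - a) + E a - E b := by ring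

theorem hasDerivWithinAt_inner_apply_of_isSymmetric {B : H →L[ℝ] H}
    (hB : (B : H →ₗ[ℝ] H).IsSymmetric) {v : ℝ → H} {v' : H} {S : Set ℝ} {s : ℝ}
    (hv : HasDerivWithinAt v v' S s) :
    HasDerivWithinAt (fun s ↦ ⟪v s, B (v s)⟫) (2 * ⟪B (v s), v'⟫) S s := by
  have hsymm : ⟪v s, B v'⟫ = ⟪B (v s), v'⟫ := (hB (v s) v').symm
  have hBv : HasDerivWithinAt (fun s ↦ B (v s)) (B v') S s :=
    B.hasFDerivAt.comp_hasDerivWithinAt s hv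
  refine (hv.inner ℝ hBv).congr_deriv ?_
  rw [hsymm, real_inner_comm, two_mul]

theorem mul_norm_sq_add_two_mul_inner_sub_le {γ k : ℝ} (hγ : 0 < γ) {e g q : H}
    (hmono : ⟪e, q⟫ ≤ -γ * ‖e‖ ^ 2) (hq : ‖q‖ ≤ k * ‖e‖) :
    γ * ‖e‖ ^ 2 + 2 * ⟪e - g, q⟫ ≤ k ^ 2 / γ * ‖g‖ ^ 2 := by
  have hforcing : -⟪g, q⟫ ≤ ‖e‖ * (k * ‖g‖) :=
    calc -⟪g, q⟫ ≤ ‖g‖ * ‖q‖ := (neg_le_abs _).trans (abs_real_inner_le_norm g q)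
      _ ≤ ‖g‖ * (k * ‖e‖) := by gcongr
      _ = ‖e‖ * (k * ‖g‖) := by ring
  have hyoung : 2 * ‖e‖ * (k * ‖g‖) ≤ γ * ‖e‖ ^ 2 + γ⁻¹ * (k * ‖g‖) ^ 2 :=
    two_mul_le_add_mul_sq hγ
  calc γ * ‖e‖ ^ 2 + 2 * ⟪e - g, q⟫ = γ * ‖e‖ ^ 2 + 2 * ⟪e, q⟫ + 2 * -⟪g, q⟫ := by
        rw [inner_sub_left]; ring
    _ ≤ γ⁻¹ * (k * ‖g‖) ^ 2 := by linarith
    _ = k ^ 2 / γ * ‖g‖ ^ 2 := by ring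

theorem stmt_12_general {γ k : ℝ} (hγ : 0 < γ) {B : H →L[ℝ] H}
    (hB : (B : H →ₗ[ℝ] H).IsSymmetric) {L : H → H} {u : H}
    (hgrowth : ∀ f, ‖L f‖ ≤ k * ‖f - u‖) (hmono : ∀ f, ⟪f - u, L f⟫ ≤ -γ * ‖f - u‖ ^ 2)
    {g : H} {v : ℝ → H} {t : ℝ} (ht : 0 ≤ t)
    (hv : ∀ s ∈ Icc 0 t, HasDerivWithinAt v (L (B (v s) + u + g)) (Icc 0 t) s) :
    ∫ s in Icc 0 t, ‖(B (v s) + u + g) - u‖ ^ 2 ≤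
      (k / γ) ^ 2 * t * ‖g‖ ^ 2 + γ⁻¹ * (⟪v 0, B (v 0)⟫ - ⟪v t, B (v t)⟫) := by
  have hv_cont : ContinuousOn v (Icc 0 t) := fun s hs ↦ (hv s hs).continuousWithinAt
  have herror_cont : ContinuousOn (fun s ↦ γ * ‖(B (v s) + u + g) - u‖ ^ 2) (Icc 0 t) := by
    fun_prop
  have hdissipation (s : ℝ) : γ * ‖(B (v s) + u + g) - u‖ ^ 2 +
      2 * ⟪B (v s), L (B (v s) + u + g)⟫ ≤ k ^ 2 / γ * ‖g‖ ^ 2 := by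
    have herror : (B (v s) + u + g) - u - g = B (v s) := by abel
    simpa only [herror] using
      mul_norm_sq_add_two_mul_inner_sub_le (g := g) hγ (hmono _) (hgrowth (B (v s) + u + g))
  have henergy := integral_le_of_add_hasDerivWithinAt_le ht herror_cont.integrableOn_Icc
    (fun s hs ↦ hasDerivWithinAt_inner_apply_of_isSymmetric hB (hv s hs))
    fun s _ ↦ hdissipation s
  rw [intervalIntegral.integral_const_mul, intervalIntegral.integral_of_le ht,
    ← MeasureTheory.integral_Icc_eq_integral_Ioc] at henergy
  refine le_of_mul_le_mul_left (henergy.trans_eq ?_) hγ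
  field_simp
  ring

end

/-- Key quantitative estimate: for `Q_t = 𝓑v_t + u + g` driven by
`v' = 𝓛(𝓑v + u + g)`, with `𝓑` positive self-adjoint satisfying `‖𝓑v‖² ≤ λ⟨v,𝓑v⟩`
and `𝓛` Lipschitz and strongly monotone with `𝓛u = 0`, one has
`∫₀ᵗ ‖Q_s − u‖² ds ≤ C t ‖g‖² + C ⟨v₀, 𝓑v₀⟩`, with `C` depending only on `γ, λ, k₀`. -/
theorem stmt_12 {H : Type*} [NormedAddCommGroup H] [InnerProductSpace ℝ H] [CompleteSpace H]
    (lam γ k₀ : ℝ) (hlam : 0 < lam) (hγ : 0 < γ) (hk₀ : 0 < k₀) :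
    ∃ C : ℝ, 0 < C ∧
      ∀ (B : H →L[ℝ] H), (∀ x y : H, ⟪B x, y⟫ = ⟪x, B y⟫) →
        (∀ v : H, 0 ≤ ⟪v, B v⟫) → (∀ v : H, ‖B v‖ ^ 2 ≤ lam * ⟪v, B v⟫) →
      ∀ (L : H → H), LipschitzWith k₀.toNNReal L →
        (∀ f₁ f₂ : H, ⟪f₁ - f₂, L f₁ - L f₂⟫ ≤ -γ * ‖f₁ - f₂‖ ^ 2) →
      ∀ (u : H), L u = 0 →
      ∀ (g v₀ : H) (v : ℝ → H), v 0 = v₀ →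
        (∀ t ∈ Set.Ici (0 : ℝ),
          HasDerivWithinAt v (L (B (v t) + u + g)) (Set.Ici 0) t) →
      ∀ t : ℝ, 0 ≤ t →
        ∫ s in Set.Icc (0 : ℝ) t, ‖(B (v s) + u + g) - u‖ ^ 2
          ≤ C * t * ‖g‖ ^ 2 + C * ⟪v₀, B v₀⟫ := by
  refine ⟨max ((k₀ / γ) ^ 2) γ⁻¹, by positivity, ?_⟩
  intro B hB hpos _ L hL hmono u hu g v₀ v hv₀ hv t ht
  have hgrowth (f : H) : ‖L f‖ ≤ k₀ * ‖f - u‖ := by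
    simpa only [hu, sub_zero, Real.coe_toNNReal _ hk₀.le] using hL.norm_sub_le f u
  have hmono_u (f : H) : ⟪f - u, L f⟫ ≤ -γ * ‖f - u‖ ^ 2 := by
    simpa only [hu, sub_zero] using hmono f u
  have henergy₀ : 0 ≤ ⟪v₀, B v₀⟫ := hpos v₀
  calc ∫ s in Set.Icc (0 : ℝ) t, ‖(B (v s) + u + g) - u‖ ^ 2
      ≤ (k₀ / γ) ^ 2 * t * ‖g‖ ^ 2 + γ⁻¹ * (⟪v₀, B v₀⟫ - ⟪v t, B (v t)⟫) :=
        hv₀ ▸ stmt_12_general hγ hB hgrowth hmono_u ht fun s hs ↦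
          (hv s hs.1).mono Set.Icc_subset_Ici_self
    _ ≤ (k₀ / γ) ^ 2 * t * ‖g‖ ^ 2 + γ⁻¹ * ⟪v₀, B v₀⟫ := by
        gcongr
        exact sub_le_self _ (hpos (v t))
    _ ≤ _ := by
        gcongr
        exacts [le_max_left _ _, le_max_right _ _]
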